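/- arXiv:2006.16619 — 2 statements merged into one kernel-verified Lean document; each statement's English description precedes it below -/
import Mathlib

section
/- (Hua–Lin classification of CD-Ricci-flat graphs of girth at least 5.) Let G = (V,E) be a finite connected simple graph of girth at least 5 (with all vertex degrees positive where the Laplacian is used). Then G satisfies CD(∞,0), i.e. Γ₂(f,f)(x) ≥ 0 for all functions f : V → ℝ and all vertices x, if and only if G is isomorphic to one of: the path graph P_k on k ≥ 1 vertices; the cycle graph C_n with n ≥ 5; the star graph Star_n with n ≥ 3 leaves (one central vertex joined to n leaves); or one of the three extended star graphs Star₃^{1,2,3}, namely the trees having exactly one vertex of degree 3 from which emanate three paths of lengths (1,1,2), (1,2,2), and (2,2,2) respectively. -/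
open Finset

variable {V : Type*} [Fintype V] [DecidableEq V]

/-- The (Lin–Yau convention) graph Laplacian operator on functions:
`(Δf)(x) = (1/d(x)) ∑_{y ~ x} (f y − f x)`. -/
noncomputable def SimpleGraph.lapOp (G : SimpleGraph V) [DecidableRel G.Adj]
    (f : V → ℝ) : V → ℝ :=
  fun x => (∑ y ∈ G.neighborFinset x, (f y - f x)) / (G.degree x : ℝ)

/-- The bilinear form `Γ(f,g) = ½( Δ(fg) − f·Δg − g·Δf )`. -/
noncomputable def SimpleGraph.gammaOp (G : SimpleGraph V) [DecidableRel G.Adj]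
    (f g : V → ℝ) : V → ℝ :=
  fun x => (G.lapOp (f * g) x - f x * G.lapOp g x - g x * G.lapOp f x) / 2

/-- The iterated form `Γ₂(f,g) = ½( ΔΓ(f,g) − Γ(f,Δg) − Γ(g,Δf) )`. -/
noncomputable def SimpleGraph.gamma2Op (G : SimpleGraph V) [DecidableRel G.Adj]
    (f g : V → ℝ) : V → ℝ :=
  fun x => (G.lapOp (G.gammaOp f g) x - G.gammaOp f (G.lapOp g) x
      - G.gammaOp g (G.lapOp f) x) / 2

/-- The "extended star" (spider) tree with one centre vertex and three pendant paths,
of lengths `l 0`, `l 1`, `l 2`.  The centre is `none`; the vertex `some ⟨i, j⟩` is the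
`(j+1)`-st vertex along the `i`-th arm. -/
def spiderGraph (l : Fin 3 → ℕ) : SimpleGraph (Option (Σ i : Fin 3, Fin (l i))) :=
  SimpleGraph.fromRel fun x y =>
    (x = none ∧ ∃ (i : Fin 3) (h : 0 < l i), y = some ⟨i, ⟨0, h⟩⟩) ∨
    (∃ (i : Fin 3) (j : ℕ) (h1 : j < l i) (h2 : j + 1 < l i),
      x = some ⟨i, ⟨j, h1⟩⟩ ∧ y = some ⟨i, ⟨j + 1, h2⟩⟩)

/-!
In girth at least five the ball of radius two around `x` is a tree, so the values of `f` at distance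
two from `x` can be prescribed independently. For `y ∼ x` and `z ∼ y` they enter
`2 d(x) Γ₂(f,f)(x)` only through the squares `(f z - 2 f y + f x)²`, all of which vanish for a
suitable choice; hence `Γ₂ ≥ 0` at `x` says that a quadratic form `Q` in the increments
`a y = f y - f x` is non-negative. If `x` is not a leaf and has a neighbour `y` with `d(y) ≥ 3`,
testing `Q` on `e_y - e_z` makes every other neighbour `z` of `x` a leaf, and testing it on the
vector that is `2 d(x) - 1` at `y` and `-1` elsewhere gives `d(x) = 2` and `d(y) = 3`. So a
connected graph of non-negative curvature has maximal degree two, or is a star, or is a spider with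
three arms of length at most two.
-/

section Girth

variable {α β : Type*} {G : SimpleGraph α}

lemma cliqueFree_three_of_four_le_egirth (h : 4 ≤ G.egirth) : G.CliqueFree 3 := by
  intro s hs
  obtain ⟨u, w, hw, hlen⟩ := SimpleGraph.is3Clique_iff_exists_cycle_length_three.1 ⟨s, hs⟩
  have hle := SimpleGraph.le_egirth.1 h u w hw
  rw [hlen] at hle
  exact absurd hle (by decide)

lemma commonNeighbors_subsingleton_of_five_le_egirth (h : 5 ≤ G.egirth) {a c : α}
    (hac : a ≠ c) : (G.commonNeighbors a c).Subsingleton := by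
  rintro b ⟨hab, hcb⟩ d ⟨had, hcd⟩
  rw [SimpleGraph.mem_neighborSet] at hab hcb had hcd
  by_contra hbd
  let w : G.Walk a a := .cons hab (.cons hcb.symm (.cons hcd (.cons had.symm .nil)))
  have hw : w.IsCycle := by
    rw [SimpleGraph.Walk.cons_isCycle_iff, SimpleGraph.Walk.isPath_def]
    simp [hbd, hac, hac.symm, hab.ne', hcb.ne', hcd.ne, had.ne']
  have : (5 : ℕ∞) ≤ (4 : ℕ) := SimpleGraph.le_egirth.1 h a w hw
  exact absurd this (by decide)

lemma exists_extension_to_ball_two (h : 5 ≤ G.egirth) (x : α) (r : β) (a b : α → β) :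
    ∃ f : α → β, f x = r ∧ (∀ y, G.Adj x y → f y = a y) ∧
      ∀ y z, G.Adj x y → G.Adj y z → z ≠ x → f z = b y := by
  classical
  refine ⟨fun z ↦ if z = x then r else if G.Adj x z then a z else
    if hz : ∃ y, G.Adj x y ∧ G.Adj y z then b hz.choose else r, by simp, ?_, ?_⟩
  · intro y hxy
    simp [hxy, hxy.ne']
  · intro y z hxy hyz hzx
    have hxz : ¬ G.Adj x z := fun hxz ↦
      (cliqueFree_three_of_four_le_egirth (le_trans (by decide) h)) {x, y, z}
        (SimpleGraph.is3Clique_triple_iff.2 ⟨hxy, hxz, hyz⟩)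
    have hparent : ∃ y, G.Adj x y ∧ G.Adj y z := ⟨y, hxy, hyz⟩
    have hy : hparent.choose = y := commonNeighbors_subsingleton_of_five_le_egirth h hzx.symm
      ⟨hparent.choose_spec.1, hparent.choose_spec.2.symm⟩ ⟨hxy, hyz.symm⟩
    simp only [hzx, hxz, hparent, if_false, dif_pos, hy]

end Girth

section Curvature

variable {α : Type*}

/-- The quadratic form in the increments `a y = f y - f x` at the neighbours `y` of `x` that is
left of `2 d(x) Γ₂(f,f)(x)` once the values of `f` at distance two from `x` are chosen optimally
(in girth at least five). -/
noncomputable def curvatureForm (G : SimpleGraph α) [G.LocallyFinite] (x : α) (a : α → ℝ) : ℝ :=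
  ∑ y ∈ G.neighborFinset x, (2 / (G.degree y : ℝ) - 1) * a y ^ 2
    + (∑ y ∈ G.neighborFinset x, a y) ^ 2 / G.degree x

variable [Fintype α] (G : SimpleGraph α) [DecidableRel G.Adj]

lemma degree_mul_lapOp (f : α → ℝ) (x : α) :
    G.degree x * G.lapOp f x = ∑ y ∈ G.neighborFinset x, (f y - f x) := by
  obtain hx | hx := eq_or_ne (G.degree x) 0
  · have hN : G.neighborFinset x = ∅ := by
      rwa [← card_eq_zero, G.card_neighborFinset_eq_degree]
    simp [hx, hN]
  · exact mul_div_cancel₀ _ (Nat.cast_ne_zero.2 hx)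

lemma two_mul_degree_mul_gammaOp (f g : α → ℝ) (x : α) :
    2 * G.degree x * G.gammaOp f g x =
      ∑ y ∈ G.neighborFinset x, (f y - f x) * (g y - g x) := by
  calc 2 * G.degree x * G.gammaOp f g x
      = G.degree x * G.lapOp (f * g) x - f x * (G.degree x * G.lapOp g x)
          - g x * (G.degree x * G.lapOp f x) := by
        rw [SimpleGraph.gammaOp]; ring
    _ = ∑ y ∈ G.neighborFinset x, (f y - f x) * (g y - g x) := by
        simp only [degree_mul_lapOp, mul_sum, ← sum_sub_distrib, Pi.mul_apply]
        exact sum_congr rfl fun y _ ↦ by ring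

variable {G}

lemma gammaOp_self_sub_mul_lapOp [DecidableEq α] {x y : α} (hxy : G.Adj x y) (f : α → ℝ) :
    G.gammaOp f f y - (f y - f x) * G.lapOp f y =
      (2 / (G.degree y : ℝ) - 1 / 2) * (f y - f x) ^ 2
        + (∑ z ∈ (G.neighborFinset y).erase x, (f z - 2 * f y + f x) ^ 2)
          / (2 * (G.degree y : ℝ)) := by
  have hy : (G.degree y : ℝ) ≠ 0 := Nat.cast_ne_zero.2 hxy.degree_pos_right.ne'
  have hx : x ∈ G.neighborFinset y := (G.mem_neighborFinset y x).2 hxy.symm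
  have hexpand : ∑ z ∈ G.neighborFinset y, (f z - 2 * f y + f x) ^ 2 =
      2 * G.degree y * G.gammaOp f f y - 2 * (f y - f x) * (G.degree y * G.lapOp f y)
        + G.degree y * (f y - f x) ^ 2 := by
    rw [two_mul_degree_mul_gammaOp, degree_mul_lapOp, mul_sum, ← sum_sub_distrib,
      ← G.card_neighborFinset_eq_degree, ← nsmul_eq_mul, ← sum_const, ← sum_add_distrib]
    exact sum_congr rfl fun z _ ↦ by ring
  rw [← add_sum_erase _ _ hx] at hexpand
  rw [eq_sub_of_add_eq' hexpand]
  field_simp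
  ring

theorem two_mul_degree_mul_gamma2Op_self [DecidableEq α] (f : α → ℝ) (x : α) :
    2 * G.degree x * G.gamma2Op f f x = curvatureForm G x (fun y ↦ f y - f x)
      + ∑ y ∈ G.neighborFinset x,
          (∑ z ∈ (G.neighborFinset y).erase x, (f z - 2 * f y + f x) ^ 2)
            / (2 * (G.degree y : ℝ)) := by
  have hlap : ∑ y ∈ G.neighborFinset x, (f y - f x) * G.lapOp f x =
      (∑ y ∈ G.neighborFinset x, (f y - f x)) ^ 2 / G.degree x := by
    rw [← sum_mul, SimpleGraph.lapOp]; ring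
  have hgamma : ∑ _y ∈ G.neighborFinset x, G.gammaOp f f x =
      ∑ y ∈ G.neighborFinset x, (f y - f x) ^ 2 / 2 := by
    have := two_mul_degree_mul_gammaOp G f f x
    simp only [← pow_two] at this
    rw [sum_const, G.card_neighborFinset_eq_degree, nsmul_eq_mul, ← sum_div, ← this]
    ring
  calc 2 * G.degree x * G.gamma2Op f f x
      = G.degree x * G.lapOp (G.gammaOp f f) x
          - 2 * G.degree x * G.gammaOp f (G.lapOp f) x := by
        rw [SimpleGraph.gamma2Op]; ring
    _ = ∑ y ∈ G.neighborFinset x, (G.gammaOp f f y - (f y - f x) * G.lapOp f y)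
          - ∑ _y ∈ G.neighborFinset x, G.gammaOp f f x
          + ∑ y ∈ G.neighborFinset x, (f y - f x) * G.lapOp f x := by
        rw [degree_mul_lapOp, two_mul_degree_mul_gammaOp, ← sum_sub_distrib, ← sum_sub_distrib,
          ← sum_add_distrib]
        exact sum_congr rfl fun y _ ↦ by ring
    _ = _ := by
        rw [hlap, hgamma, sum_congr rfl fun y hy ↦
          gammaOp_self_sub_mul_lapOp ((G.mem_neighborFinset x y).1 hy) f, curvatureForm,
          add_right_comm, ← sum_sub_distrib, ← sum_add_distrib]
        congr 1
        exact sum_congr rfl fun y _ ↦ by ring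

theorem forall_gamma2Op_self_nonneg_iff (hgirth : 5 ≤ G.egirth) {x : α} (hx : 0 < G.degree x) :
    (∀ f, 0 ≤ G.gamma2Op f f x) ↔ ∀ a, 0 ≤ curvatureForm G x a := by
  classical
  have hpos : (0 : ℝ) < 2 * G.degree x := by positivity
  constructor
  · intro h a
    obtain ⟨f, hfx, hf₁, hf₂⟩ :=
      exists_extension_to_ball_two hgirth x 0 a (fun y ↦ 2 * a y)
    have hrest : ∑ y ∈ G.neighborFinset x,
        (∑ z ∈ (G.neighborFinset y).erase x, (f z - 2 * f y + f x) ^ 2) / (2 * (G.degree y : ℝ))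
          = 0 := by
      refine sum_eq_zero fun y hy ↦ ?_
      rw [SimpleGraph.mem_neighborFinset] at hy
      rw [sum_eq_zero, zero_div]
      intro z hz
      rw [mem_erase, SimpleGraph.mem_neighborFinset] at hz
      rw [hf₂ y z hy hz.2 hz.1, hf₁ y hy, hfx]
      ring
    have hform : curvatureForm G x (fun y ↦ f y - f x) = curvatureForm G x a := by
      have hfa : ∀ y ∈ G.neighborFinset x, f y - f x = a y := fun y hy ↦ by
        rw [hf₁ y ((G.mem_neighborFinset x y).1 hy), hfx, sub_zero]
      unfold curvatureForm
      rw [sum_congr rfl hfa]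
      congr 1
      exact sum_congr rfl fun y hy ↦ by simp only [hfa y hy]
    have hident := two_mul_degree_mul_gamma2Op_self (G := G) f x
    rw [hrest, add_zero, hform] at hident
    exact hident ▸ mul_nonneg hpos.le (h f)
  · intro h f
    refine nonneg_of_mul_nonneg_right ?_ hpos
    rw [two_mul_degree_mul_gamma2Op_self]
    exact add_nonneg (h _) (sum_nonneg fun y _ ↦ by positivity)

end Curvature

section BranchCondition

variable {α : Type*} {G : SimpleGraph α} [G.LocallyFinite] {x y z : α}

/-- The combinatorial form of non-negative curvature at `x` in girth at least five: a neighbour `y`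
of degree at least three forces `x` to be a leaf, or to subdivide an edge between `y`, which has
degree exactly three, and a leaf. -/
def BranchCondition (G : SimpleGraph α) [G.LocallyFinite] (x : α) : Prop :=
  ∀ y, G.Adj x y → 3 ≤ G.degree y → 2 ≤ G.degree x →
    G.degree x = 2 ∧ G.degree y = 3 ∧ ∀ z, G.Adj x z → z ≠ y → G.degree z = 1

lemma curvatureForm_single_sub_single [DecidableEq α] (hxy : G.Adj x y) (hxz : G.Adj x z)
    (hzy : z ≠ y) :
    curvatureForm G x (Pi.single y 1 - Pi.single z 1) =
      (2 / (G.degree y : ℝ) - 1) + (2 / (G.degree z : ℝ) - 1) := by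
  have hy : y ∈ G.neighborFinset x := (G.mem_neighborFinset x y).2 hxy
  have hz : z ∈ G.neighborFinset x := (G.mem_neighborFinset x z).2 hxz
  rw [curvatureForm, sum_eq_add_of_mem y z hy hz hzy.symm, sum_eq_add_of_mem y z hy hz hzy.symm]
  · simp [hzy, hzy.symm]
  all_goals
    rintro w - ⟨hwy, hwz⟩
    simp [hwy, hwz]

lemma degree_eq_one_of_curvatureForm_nonneg (h : ∀ a, 0 ≤ curvatureForm G x a)
    (hxy : G.Adj x y) (hy : 3 ≤ G.degree y) (hxz : G.Adj x z) (hzy : z ≠ y) :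
    G.degree z = 1 := by
  classical
  have hsum := h (Pi.single y 1 - Pi.single z 1)
  rw [curvatureForm_single_sub_single hxy hxz hzy] at hsum
  have hz : 0 < G.degree z := hxz.degree_pos_right
  by_contra hz1
  have hybound : 2 / (G.degree y : ℝ) ≤ 2 / 3 := by
    gcongr; exact_mod_cast hy
  have hzbound : 2 / (G.degree z : ℝ) ≤ 2 / 2 := by
    gcongr; exact_mod_cast (by omega : 2 ≤ G.degree z)
  linarith

lemma curvatureForm_update_const [DecidableEq α] (hxy : G.Adj x y)
    (hleaf : ∀ z, G.Adj x z → z ≠ y → G.degree z = 1) (s t : ℝ) :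
    curvatureForm G x (Function.update (fun _ ↦ t) y s) =
      (2 / (G.degree y : ℝ) - 1) * s ^ 2 + (G.degree x - 1) * t ^ 2
        + (s + (G.degree x - 1) * t) ^ 2 / G.degree x := by
  have hy : y ∈ G.neighborFinset x := (G.mem_neighborFinset x y).2 hxy
  have hcard : (((G.neighborFinset x).erase y).card : ℝ) = G.degree x - 1 := by
    rw [cast_card_erase_of_mem hy, G.card_neighborFinset_eq_degree]
  have hsq : ∀ z ∈ (G.neighborFinset x).erase y,
      (2 / (G.degree z : ℝ) - 1) * Function.update (fun _ ↦ t) y s z ^ 2 = t ^ 2 := fun z hz ↦ by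
    rw [mem_erase, G.mem_neighborFinset] at hz
    rw [hleaf z hz.2 hz.1, Function.update_of_ne hz.1, Nat.cast_one]
    ring
  have hval : ∀ z ∈ (G.neighborFinset x).erase y, Function.update (fun _ ↦ t) y s z = t :=
    fun z hz ↦ Function.update_of_ne (ne_of_mem_erase hz) _ _
  rw [curvatureForm, ← add_sum_erase _ _ hy, ← add_sum_erase _ _ hy, sum_congr rfl hsq,
    sum_congr rfl hval, sum_const, sum_const, nsmul_eq_mul, nsmul_eq_mul, hcard,
    Function.update_self]

lemma degree_eq_two_and_degree_eq_three_of_curvatureForm_nonneg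
    (h : ∀ a, 0 ≤ curvatureForm G x a) (hxy : G.Adj x y) (hy : 3 ≤ G.degree y)
    (hx : 2 ≤ G.degree x) (hleaf : ∀ z, G.Adj x z → z ≠ y → G.degree z = 1) :
    G.degree x = 2 ∧ G.degree y = 3 := by
  classical
  obtain ⟨D, hD⟩ : ∃ D, D = (G.degree x : ℝ) := ⟨_, rfl⟩
  obtain ⟨E, hE⟩ : ∃ E, E = (G.degree y : ℝ) := ⟨_, rfl⟩
  have hD2 : 2 ≤ D := by rw [hD]; exact_mod_cast hx
  have hE3 : 3 ≤ E := by rw [hE]; exact_mod_cast hy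
  have hform : 0 ≤ (2 * D - 1) / E * ((2 - E) * (2 * D - 1) + E) := by
    convert h (Function.update (fun _ ↦ -1) y (2 * D - 1)) using 1
    rw [curvatureForm_update_const hxy hleaf, ← hD, ← hE]
    field_simp
    ring
  have hkey : 0 ≤ (2 - E) * (2 * D - 1) + E :=
    nonneg_of_mul_nonneg_right hform (div_pos (by linarith) (by linarith))
  have hxlt : G.degree x < 3 := by
    rw [← Nat.cast_lt (α := ℝ), ← hD, Nat.cast_ofNat]
    by_contra! hD3
    nlinarith
  have hyle : G.degree y ≤ 3 := by
    rw [← Nat.cast_le (α := ℝ), ← hE, Nat.cast_ofNat]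
    nlinarith
  omega

lemma curvatureForm_nonneg_of_forall_degree_le_two (h : ∀ y, G.Adj x y → G.degree y ≤ 2)
    (a : α → ℝ) : 0 ≤ curvatureForm G x a := by
  refine add_nonneg (sum_nonneg fun y hy ↦ mul_nonneg ?_ (sq_nonneg _)) (by positivity)
  rw [G.mem_neighborFinset] at hy
  rw [sub_nonneg, one_le_div (Nat.cast_pos.2 hy.degree_pos_right)]
  exact_mod_cast h y hy

lemma curvatureForm_nonneg_of_degree_eq_one (hx : G.degree x = 1) (a : α → ℝ) :
    0 ≤ curvatureForm G x a := by
  obtain ⟨y, hy⟩ := card_eq_one.1 ((G.card_neighborFinset_eq_degree x).trans hx)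
  rw [curvatureForm, hy, sum_singleton, sum_singleton, hx]
  calc (0 : ℝ) ≤ 2 / G.degree y * a y ^ 2 := by positivity
    _ = _ := by push_cast; ring

lemma curvatureForm_nonneg_of_degrees_eq (hxy : G.Adj x y) (hx : G.degree x = 2)
    (hy : G.degree y = 3) (hleaf : ∀ z, G.Adj x z → z ≠ y → G.degree z = 1) (a : α → ℝ) :
    0 ≤ curvatureForm G x a := by
  classical
  have hyx : y ∈ G.neighborFinset x := (G.mem_neighborFinset x y).2 hxy
  obtain ⟨z, hz⟩ : ∃ z, (G.neighborFinset x).erase y = {z} := by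
    rw [← card_eq_one, card_erase_of_mem hyx, G.card_neighborFinset_eq_degree, hx]
  have hzx : z ∈ (G.neighborFinset x).erase y := hz ▸ mem_singleton_self z
  rw [mem_erase, G.mem_neighborFinset] at hzx
  rw [curvatureForm, ← add_sum_erase _ _ hyx, ← add_sum_erase _ _ hyx, hz, sum_singleton,
    sum_singleton, hx, hy, hleaf z hzx.2 hzx.1]
  calc 0 ≤ (a y + 3 * a z) ^ 2 / 6 := by positivity
    _ = _ := by push_cast; ring

theorem forall_curvatureForm_nonneg_iff :
    (∀ a, 0 ≤ curvatureForm G x a) ↔ BranchCondition G x := by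
  constructor
  · intro h y hxy hy hx
    have hleaf : ∀ z, G.Adj x z → z ≠ y → G.degree z = 1 := fun z ↦
      degree_eq_one_of_curvatureForm_nonneg h hxy hy
    obtain ⟨hx2, hy3⟩ := degree_eq_two_and_degree_eq_three_of_curvatureForm_nonneg h hxy hy hx hleaf
    exact ⟨hx2, hy3, hleaf⟩
  · intro h a
    by_cases hsmall : ∀ y, G.Adj x y → G.degree y ≤ 2
    · exact curvatureForm_nonneg_of_forall_degree_le_two hsmall a
    push Not at hsmall
    obtain ⟨y, hxy, hy⟩ := hsmall
    obtain hx | hx := Nat.lt_or_ge (G.degree x) 2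
    · have hxpos : 0 < G.degree x := hxy.degree_pos_left
      exact curvatureForm_nonneg_of_degree_eq_one (by omega) a
    · obtain ⟨hx2, hy3, hleaf⟩ := h y hxy hy hx
      exact curvatureForm_nonneg_of_degrees_eq hxy hx2 hy3 hleaf a

end BranchCondition

theorem forall_gamma2Op_self_nonneg_iff_branchCondition {α : Type*} [Fintype α]
    {G : SimpleGraph α} [DecidableRel G.Adj] (hgirth : 5 ≤ G.egirth)
    (hdeg : ∀ v, 0 < G.degree v) :
    (∀ f x, 0 ≤ G.gamma2Op f f x) ↔ ∀ x, BranchCondition G x :=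
  forall_comm.trans <| forall_congr' fun x ↦
    (forall_gamma2Op_self_nonneg_iff hgirth (hdeg x)).trans forall_curvatureForm_nonneg_iff

section Recognition

variable {α β : Type*} {G : SimpleGraph α} {H : SimpleGraph β}

theorem nonempty_iso_of_injective_of_adj_iff [Nonempty β] (hG : G.Preconnected) {f : β → α}
    (hf : Function.Injective f) (hadj : ∀ u w, G.Adj (f u) w ↔ ∃ v, H.Adj u v ∧ f v = w) :
    Nonempty (G ≃g H) := by
  have hsurj : Function.Surjective f := by
    by_contra! hns
    obtain ⟨w, hw⟩ := not_forall.1 hns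
    obtain ⟨u⟩ := ‹Nonempty β›
    obtain ⟨p⟩ := hG (f u) w
    obtain ⟨d, -, ⟨v, hv⟩, hd⟩ := p.exists_boundary_dart (Set.range f) ⟨u, rfl⟩ hw
    obtain ⟨v', -, hv'⟩ := (hadj v d.snd).1 (hv ▸ d.adj)
    exact hd ⟨v', hv'⟩
  refine ⟨SimpleGraph.Iso.symm ⟨Equiv.ofBijective f ⟨hf, hsurj⟩, fun {u v} ↦ ?_⟩⟩
  exact (hadj u (f v)).trans
    ⟨fun ⟨v', huv', hv'⟩ ↦ hf hv' ▸ huv', fun huv ↦ ⟨v, huv, rfl⟩⟩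

theorem nonempty_iso_of_copy_of_degree_le [Nonempty β] [G.LocallyFinite] [H.LocallyFinite]
    (hG : G.Preconnected) (f : SimpleGraph.Copy H G) (hdeg : ∀ u, G.degree (f u) ≤ H.degree u) :
    Nonempty (G ≃g H) := by
  refine nonempty_iso_of_injective_of_adj_iff hG f.injective fun u w ↦ ⟨fun hw ↦ ?_, ?_⟩
  · have hcard : Nat.card (G.neighborSet (f u)) ≤ Nat.card (H.neighborSet u) := by
      simpa only [Nat.card_eq_fintype_card, SimpleGraph.card_neighborSet_eq_degree] using hdeg u
    obtain ⟨v, hv⟩ :=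
      ((f.mapNeighborSet u).injective.bijective_of_nat_card_le hcard).surjective ⟨w, hw⟩
    exact ⟨v, v.2, congrArg Subtype.val hv⟩
  · rintro ⟨v, huv, rfl⟩
    exact f.toHom.map_adj huv

lemma exists_iso_cycleGraph [G.LocallyFinite] (hG : G.Preconnected) (hcyc : ¬ G.IsAcyclic)
    (hdeg : ∀ v, G.degree v ≤ 2) :
    ∃ n : ℕ, G.egirth ≤ n ∧ Nonempty (G ≃g SimpleGraph.cycleGraph n) := by
  simp only [SimpleGraph.IsAcyclic, not_forall, not_not] at hcyc
  obtain ⟨v, p, hp⟩ := hcyc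
  obtain ⟨m, hm⟩ := Nat.exists_eq_add_of_le' hp.three_le_length
  obtain ⟨f⟩ := (SimpleGraph.cycleGraph_isContained_iff hp.three_le_length).2 ⟨v, p, hp, rfl⟩
  refine ⟨p.length, SimpleGraph.egirth_le_length hp, ?_⟩
  rw [hm] at f ⊢
  exact nonempty_iso_of_copy_of_degree_le hG f fun u ↦
    (hdeg _).trans SimpleGraph.cycleGraph_degree_three_le.ge

lemma eq_or_eq_of_degree_le_two [G.LocallyFinite] {v a b w : α} (hv : G.degree v ≤ 2) (hab : a ≠ b)
    (ha : G.Adj v a) (hb : G.Adj v b) (hw : G.Adj v w) : w = a ∨ w = b := by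
  by_contra! hne
  classical
  have hsub : {w, a, b} ⊆ G.neighborFinset v := by
    simp [insert_subset_iff, ha, hb, hw]
  have hcard := card_le_card hsub
  rw [card_eq_three.2 ⟨w, a, b, hne.1, hne.2, hab, rfl⟩, G.card_neighborFinset_eq_degree] at hcard
  omega

lemma eq_snd_of_adj_start_of_forall_length_le (hG : G.IsAcyclic) {u v : α} {p : G.Walk u v}
    (hp : p.IsPath) (hmax : ∀ u' v' (q : G.Walk u' v'), q.IsPath → q.length ≤ p.length) {w : α}
    (hw : G.Adj u w) : ¬ p.Nil ∧ w = p.snd := by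
  have hsupp : w ∈ p.support := by
    by_contra hsupp
    have hle := hmax w v (p.cons hw.symm) (hp.cons hsupp)
    rw [SimpleGraph.Walk.length_cons] at hle
    omega
  refine ⟨fun hnil ↦ ?_, hG.eq_snd_of_adj_start hp hw hsupp⟩
  rw [SimpleGraph.Walk.nil_iff_support_eq] at hnil
  exact hw.ne' (List.mem_singleton.1 (hnil ▸ hsupp))

lemma eq_getVert_of_adj_getVert [G.LocallyFinite] (hG : G.IsAcyclic) (hdeg : ∀ v, G.degree v ≤ 2)
    {u v : α} {p : G.Walk u v} (hp : p.IsPath)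
    (hmax : ∀ u' v' (q : G.Walk u' v'), q.IsPath → q.length ≤ p.length) {i : ℕ}
    (hi : i ≤ p.length) {w : α} (hw : G.Adj (p.getVert i) w) :
    ∃ j ≤ p.length, (i + 1 = j ∨ j + 1 = i) ∧ p.getVert j = w := by
  obtain rfl | hpos := Nat.eq_zero_or_pos i
  · rw [p.getVert_zero] at hw
    obtain ⟨hnil, rfl⟩ := eq_snd_of_adj_start_of_forall_length_le hG hp hmax hw
    exact ⟨1, SimpleGraph.Walk.not_nil_iff_lt_length.1 hnil, .inl rfl, rfl⟩
  obtain rfl | hlt := hi.eq_or_lt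
  · rw [p.getVert_length] at hw
    obtain ⟨-, rfl⟩ := eq_snd_of_adj_start_of_forall_length_le hG hp.reverse
      (by simpa only [p.length_reverse] using hmax) hw
    exact ⟨p.length - 1, Nat.sub_le _ _, .inr (Nat.sub_add_cancel hpos), p.snd_reverse.symm⟩
  · have hne : p.getVert (i - 1) ≠ p.getVert (i + 1) := fun h ↦ by
      have := hp.getVert_injOn (show i - 1 ≤ p.length by omega) hlt h
      omega
    have hprev : G.Adj (p.getVert i) (p.getVert (i - 1)) := by
      have hadj := p.adj_getVert_succ (i := i - 1) (by omega)
      rw [Nat.sub_add_cancel hpos] at hadj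
      exact hadj.symm
    obtain rfl | rfl := eq_or_eq_of_degree_le_two (hdeg _) hne hprev (p.adj_getVert_succ hlt) hw
    · exact ⟨i - 1, by omega, .inr (Nat.sub_add_cancel hpos), rfl⟩
    · exact ⟨i + 1, hlt, .inl rfl, rfl⟩

lemma exists_iso_pathGraph [Finite α] [Nonempty α] [G.LocallyFinite] (hG : G.Preconnected)
    (hacyc : G.IsAcyclic) (hdeg : ∀ v, G.degree v ≤ 2) :
    ∃ k : ℕ, 1 ≤ k ∧ Nonempty (G ≃g SimpleGraph.pathGraph k) := by
  classical
  obtain ⟨u, v, p, hp, hmax⟩ :=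
    SimpleGraph.Walk.exists_isPath_forall_isPath_length_le_length G
  have hcopy : ∀ i, hp.pathGraphCopy.toHom i = p.getVert i := fun i ↦
    p.support_getElem_eq_getVert _
  refine ⟨p.length + 1, by omega, nonempty_iso_of_injective_of_adj_iff hG
    hp.pathGraphCopy.injective fun i w ↦ ⟨fun hw ↦ ?_, ?_⟩⟩
  · rw [hcopy] at hw
    obtain ⟨j, hj, hij, rfl⟩ := eq_getVert_of_adj_getVert hacyc hdeg hp hmax i.is_le hw
    exact ⟨⟨j, Nat.lt_succ_of_le hj⟩, SimpleGraph.pathGraph_adj.2 hij, hcopy _⟩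
  · rintro ⟨j, hij, rfl⟩
    exact hp.pathGraphCopy.toHom.map_adj hij

theorem exists_iso_pathGraph_or_exists_iso_cycleGraph [Finite α] [Nonempty α] [G.LocallyFinite]
    (hG : G.Preconnected) (hdeg : ∀ v, G.degree v ≤ 2) :
    (∃ k : ℕ, 1 ≤ k ∧ Nonempty (G ≃g SimpleGraph.pathGraph k)) ∨
      ∃ n : ℕ, G.egirth ≤ n ∧ Nonempty (G ≃g SimpleGraph.cycleGraph n) := by
  by_cases hacyc : G.IsAcyclic
  · exact .inl (exists_iso_pathGraph hG hacyc hdeg)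
  · exact .inr (exists_iso_cycleGraph hG hacyc hdeg)

lemma adj_iff_eq_of_degree_eq_one [G.LocallyFinite] {v a w : α} (hv : G.degree v = 1)
    (ha : G.Adj v a) : G.Adj v w ↔ w = a :=
  ⟨fun hw ↦ (SimpleGraph.degree_eq_one_iff_existsUnique_adj.1 hv).unique hw ha, fun h ↦ h ▸ ha⟩

lemma nonempty_iso_completeBipartiteGraph [G.LocallyFinite] (hG : G.Preconnected) {c : α}
    (hleaf : ∀ y, G.Adj c y → G.degree y = 1) :
    Nonempty (G ≃g completeBipartiteGraph Unit (Fin (G.degree c))) := by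
  let e := Fintype.equivFinOfCardEq (G.card_neighborSet_eq_degree c)
  have hadj : ∀ i, G.Adj c (e.symm i) := fun i ↦ (e.symm i).2
  let f : Unit ⊕ Fin (G.degree c) → α := Sum.elim (fun _ ↦ c) (fun i ↦ e.symm i)
  have hf : Function.Injective f := Function.Injective.sumElim
    (Function.injective_of_subsingleton _) (Subtype.val_injective.comp e.symm.injective)
    fun _ i ↦ (hadj i).ne
  refine nonempty_iso_of_injective_of_adj_iff hG hf ?_
  rintro (⟨⟩ | i) w
  · constructor
    · intro hw
      exact ⟨.inr (e ⟨w, hw⟩), by simp, by simp [f]⟩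
    · rintro ⟨_ | i, h, rfl⟩
      · simp at h
      · exact hadj i
  · rw [show f (.inr i) = e.symm i from rfl,
      adj_iff_eq_of_degree_eq_one (hleaf _ (hadj i)) (hadj i).symm]
    constructor
    · rintro rfl
      exact ⟨.inl (), by simp, rfl⟩
    · rintro ⟨_ | j, h, rfl⟩
      · rfl
      · simp at h

end Recognition

section Spider

variable {α : Type*} {G : SimpleGraph α} {l : Fin 3 → ℕ}

lemma spiderGraph_adj_none_some {i : Fin 3} {j : Fin (l i)} :
    (spiderGraph l).Adj none (some ⟨i, j⟩) ↔ j.val = 0 := by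
  simp only [spiderGraph, SimpleGraph.fromRel_adj]
  constructor
  · rintro ⟨-, (⟨-, i', h, he⟩ | ⟨_, _, _, _, he, -⟩) | (⟨he, -⟩ | ⟨_, _, _, _, -, he⟩)⟩
    · cases he
      rfl
    all_goals cases he
  · intro hj
    exact ⟨by simp, .inl (.inl ⟨trivial, i, hj ▸ j.pos, by congr; exact Fin.ext hj⟩)⟩

lemma spiderGraph_adj_some_some {i i' : Fin 3} {j : Fin (l i)} {j' : Fin (l i')} :
    (spiderGraph l).Adj (some ⟨i, j⟩) (some ⟨i', j'⟩) ↔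
      i = i' ∧ (j.val + 1 = j'.val ∨ j'.val + 1 = j.val) := by
  simp only [spiderGraph, SimpleGraph.fromRel_adj]
  constructor
  · rintro ⟨-, (⟨he, -⟩ | ⟨_, _, _, _, he, he'⟩) | (⟨he, -⟩ | ⟨_, _, _, _, he, he'⟩)⟩
    all_goals cases he
    · cases he'
      exact ⟨rfl, .inl rfl⟩
    · cases he'
      exact ⟨rfl, .inr rfl⟩
  · obtain ⟨j, hj⟩ := j
    obtain ⟨j', hj'⟩ := j'
    rintro ⟨rfl, rfl | rfl⟩
    · exact ⟨by simp, .inl (.inr ⟨i, j, hj, hj', rfl, rfl⟩)⟩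
    · exact ⟨by simp, .inr (.inr ⟨i, j', hj', hj, rfl, rfl⟩)⟩

instance : DecidableRel (spiderGraph l).Adj
  | none, none => isFalse (spiderGraph l).irrefl
  | none, some _ => decidable_of_iff' _ spiderGraph_adj_none_some
  | some _, none => decidable_of_iff' _ ((spiderGraph l).adj_comm _ _ |>.trans
      spiderGraph_adj_none_some)
  | some _, some _ => decidable_of_iff' _ spiderGraph_adj_some_some

/-- The placement in a graph of a spider with arms of length at most two: the centre goes to `c`,
the first vertex of the `i`-th arm to `y i` and the second one to `z i`. -/
def spiderMap (l : Fin 3 → ℕ) (c : α) (y z : Fin 3 → α) : Option (Σ i : Fin 3, Fin (l i)) → α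
  | none => c
  | some ⟨i, j⟩ => if j.val = 0 then y i else z i

variable {c : α} {y z : Fin 3 → α}

lemma adj_spiderMap_iff (hl : ∀ i, l i = 1 ∨ l i = 2) (hc : ∀ w, G.Adj c w ↔ ∃ i, y i = w)
    (hy : ∀ i w, G.Adj (y i) w ↔ w = c ∨ l i = 2 ∧ w = z i)
    (hz : ∀ i, l i = 2 → ∀ w, G.Adj (z i) w ↔ w = y i)
    (u : Option (Σ i : Fin 3, Fin (l i))) (w : α) :
    G.Adj (spiderMap l c y z u) w ↔
      ∃ v, (spiderGraph l).Adj u v ∧ spiderMap l c y z v = w := by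
  have hpos : ∀ i, 0 < l i := fun i ↦ by have := hl i; omega
  simp only [Option.exists, Sigma.exists]
  obtain _ | ⟨i, j⟩ := u
  · simp only [SimpleGraph.irrefl, false_and, false_or, spiderGraph_adj_none_some, spiderMap, hc]
    refine exists_congr fun i ↦ ⟨fun h ↦ ⟨⟨0, hpos i⟩, rfl, h⟩, ?_⟩
    rintro ⟨j, hj, h⟩
    rwa [if_pos hj] at h
  · simp only [(spiderGraph l).adj_comm (some ⟨i, j⟩) none, spiderGraph_adj_none_some,
      spiderGraph_adj_some_some, spiderMap]
    obtain hj | hj : j.val = 0 ∨ j.val = 1 := by have := hl i; omega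
    · rw [if_pos hj, hy, hj]
      refine or_congr (by simp [eq_comm]) ⟨?_, ?_⟩
      · rintro ⟨hi, rfl⟩
        exact ⟨i, ⟨1, by omega⟩, ⟨rfl, .inl rfl⟩, rfl⟩
      · rintro ⟨i', j', ⟨rfl, h⟩, rfl⟩
        have := hl i
        exact ⟨by omega, if_neg (show ¬ j'.val = 0 by omega)⟩
    · rw [if_neg (by omega), hz i (by have := hl i; omega), hj]
      simp only [one_ne_zero, false_and, false_or]
      constructor
      · rintro rfl
        exact ⟨i, ⟨0, hpos i⟩, ⟨rfl, .inr rfl⟩, rfl⟩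
      · rintro ⟨i', j', ⟨rfl, h⟩, rfl⟩
        have := hl i
        exact if_pos (show j'.val = 0 by omega)

lemma spiderMap_injective (hl : ∀ i, l i = 1 ∨ l i = 2) (hinj : Function.Injective y)
    (hc : ∀ i, G.Adj c (y i))
    (hz : ∀ i, l i = 2 → z i ≠ c ∧ ∀ w, G.Adj (z i) w ↔ w = y i) :
    Function.Injective (spiderMap l c y z) := by
  have hyz : ∀ i j, l i = 2 → y j ≠ z i := fun i j hi h ↦
    (hc i).ne (((hz i hi).2 c).1 (h ▸ (hc j).symm))
  have hzz : ∀ i j, l i = 2 → l j = 2 → z i = z j → i = j := fun i j hi hj h ↦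
    hinj (((hz j hj).2 _).1 (h ▸ ((hz i hi).2 _).2 rfl))
  have hsnd : ∀ i (j : Fin (l i)), j.val ≠ 0 → l i = 2 ∧ j.val = 1 := fun i j hj ↦ by
    have := hl i; omega
  have hne : ∀ i (j : Fin (l i)), spiderMap l c y z (some ⟨i, j⟩) ≠ c := fun i j ↦ by
    simp only [spiderMap]
    split_ifs with hj
    · exact (hc i).ne'
    · exact (hz i (hsnd i j hj).1).1
  rintro (_ | ⟨i, j⟩) (_ | ⟨i', j'⟩) h
  · rfl
  · exact absurd h.symm (hne i' j')
  · exact absurd h (hne i j)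
  · suffices h' : i = i' ∧ j.val = j'.val by
      obtain ⟨rfl, hj⟩ := h'
      rw [Fin.ext hj]
    simp only [spiderMap] at h
    split_ifs at h with hj hj' hj'
    · exact ⟨hinj h, hj.trans hj'.symm⟩
    · exact absurd h (hyz i' i (hsnd i' j' hj').1)
    · exact absurd h.symm (hyz i i' (hsnd i j hj).1)
    · obtain ⟨hi, hj⟩ := hsnd i j hj
      obtain ⟨hi', hj'⟩ := hsnd i' j' hj'
      exact ⟨hzz i i' hi hi' h, hj.trans hj'.symm⟩

lemma nonempty_iso_spiderGraph (hG : G.Preconnected) (hl : ∀ i, l i = 1 ∨ l i = 2)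
    (hinj : Function.Injective y) (hc : ∀ w, G.Adj c w ↔ ∃ i, y i = w)
    (hy : ∀ i w, G.Adj (y i) w ↔ w = c ∨ l i = 2 ∧ w = z i)
    (hz : ∀ i, l i = 2 → z i ≠ c ∧ ∀ w, G.Adj (z i) w ↔ w = y i) :
    Nonempty (G ≃g spiderGraph l) :=
  nonempty_iso_of_injective_of_adj_iff hG
    (spiderMap_injective hl hinj (fun i ↦ (hc _).2 ⟨i, rfl⟩) hz)
    (adj_spiderMap_iff hl hc hy fun i hi ↦ (hz i hi).2)

lemma eq_of_monotone_of_forall_eq_one_or_two (hmono : Monotone l) (hl : ∀ i, l i = 1 ∨ l i = 2)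
    (hne : ∃ i, l i = 2) : l = ![1, 1, 2] ∨ l = ![1, 2, 2] ∨ l = ![2, 2, 2] := by
  have h01 : l 0 ≤ l 1 := hmono (by decide)
  have h2 : l 2 = 2 := by
    obtain ⟨i, hi⟩ := hne
    have hile : l i ≤ l 2 := hmono (Fin.le_last i)
    have := hl 2
    omega
  have hl_eq : l = ![l 0, l 1, l 2] := by
    ext i; fin_cases i <;> rfl
  obtain h0 | h0 := hl 0 <;> obtain h1 | h1 := hl 1
  · exact .inl (by rw [hl_eq, h0, h1, h2])
  · exact .inr (.inl (by rw [hl_eq, h0, h1, h2]))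
  · omega
  · exact .inr (.inr (by rw [hl_eq, h0, h1, h2]))

lemma exists_monotone_enumeration_neighbors {γ : Type*} [LinearOrder γ] [G.LocallyFinite] {n : ℕ}
    (hn : G.degree c = n) (g : α → γ) : ∃ y : Fin n → α, Function.Injective y ∧
      (∀ w, G.Adj c w ↔ ∃ i, y i = w) ∧ Monotone fun i ↦ g (y i) := by
  let e := Fintype.equivFinOfCardEq ((G.card_neighborSet_eq_degree c).trans hn)
  let σ := Tuple.sort fun i ↦ g (e.symm i)
  refine ⟨fun i ↦ e.symm (σ i), Subtype.val_injective.comp (e.symm.injective.comp σ.injective),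
    fun w ↦ ⟨fun hw ↦ ⟨σ.symm (e ⟨w, hw⟩), by simp⟩, ?_⟩,
    Tuple.monotone_sort fun i ↦ g (e.symm i)⟩
  rintro ⟨i, rfl⟩
  exact (e.symm (σ i)).2

lemma exists_second_neighbor [G.LocallyFinite] {x c : α} (hcond : BranchCondition G x)
    (hxc : G.Adj x c) (hx : G.degree x = 2) (hc : 3 ≤ G.degree c) :
    ∃ z, z ≠ c ∧ (∀ w, G.Adj x w ↔ w = c ∨ w = z) ∧ ∀ w, G.Adj z w ↔ w = x := by
  obtain ⟨z, hz, hzc⟩ := exists_mem_ne (s := G.neighborFinset x)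
    (by rw [G.card_neighborFinset_eq_degree, hx]; decide) c
  rw [G.mem_neighborFinset] at hz
  refine ⟨z, hzc, fun w ↦ ⟨eq_or_eq_of_degree_le_two hx.le hzc.symm hxc hz, ?_⟩, fun w ↦
    adj_iff_eq_of_degree_eq_one ((hcond c hxc hc hx.ge).2.2 z hz hzc) hz.symm⟩
  rintro (rfl | rfl) <;> assumption

lemma exists_iso_spiderGraph_of_branchCondition [G.LocallyFinite] (hG : G.Preconnected)
    (hcond : ∀ x, BranchCondition G x) {x : α} (hc : 3 ≤ G.degree c)
    (hcx : G.Adj c x) (hx : 2 ≤ G.degree x) :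
    ∃ l : Fin 3 → ℕ, Monotone l ∧ (∀ i, l i = 1 ∨ l i = 2) ∧ (∃ i, l i = 2) ∧
      Nonempty (G ≃g spiderGraph l) := by
  have hc3 : G.degree c = 3 := (hcond x c hcx.symm hc hx).2.1
  obtain ⟨y, hinj, hcy, hmono⟩ := exists_monotone_enumeration_neighbors hc3 fun w ↦ G.degree w
  have hadj : ∀ i, G.Adj (y i) c := fun i ↦ ((hcy _).2 ⟨i, rfl⟩).symm
  have hl : ∀ i, G.degree (y i) = 1 ∨ G.degree (y i) = 2 := fun i ↦ by
    have hpos : 0 < G.degree (y i) := (hadj i).degree_pos_left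
    have htwo : 2 ≤ G.degree (y i) → G.degree (y i) = 2 := fun h ↦
      (hcond _ c (hadj i) hc h).1
    omega
  have hsecond : ∀ i, ∃ z, G.degree (y i) = 2 → z ≠ c ∧
      (∀ w, G.Adj (y i) w ↔ w = c ∨ w = z) ∧ ∀ w, G.Adj z w ↔ w = y i := fun i ↦ by
    by_cases hi : G.degree (y i) = 2
    · obtain ⟨z, hz⟩ := exists_second_neighbor (hcond _) (hadj i) hi hc
      exact ⟨z, fun _ ↦ hz⟩
    · exact ⟨c, fun h ↦ absurd h hi⟩
  choose z hz using hsecond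
  have hy : ∀ i w, G.Adj (y i) w ↔ w = c ∨ G.degree (y i) = 2 ∧ w = z i := fun i w ↦ by
    obtain hi | hi := hl i
    · simp [adj_iff_eq_of_degree_eq_one hi (hadj i), hi]
    · simp [(hz i hi).2.1, hi]
  have hiso := nonempty_iso_spiderGraph hG hl hinj hcy hy fun i hi ↦ ⟨(hz i hi).1, (hz i hi).2.2⟩
  obtain ⟨i, rfl⟩ := (hcy x).1 hcx
  exact ⟨_, hmono, hl, ⟨i, (hl i).resolve_left (by omega)⟩, hiso⟩

theorem nonempty_iso_spiderGraph_of_branchCondition [G.LocallyFinite] (hG : G.Preconnected)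
    (hcond : ∀ x, BranchCondition G x) {x : α} (hc : 3 ≤ G.degree c)
    (hcx : G.Adj c x) (hx : 2 ≤ G.degree x) :
    Nonempty (G ≃g spiderGraph ![1, 1, 2]) ∨ Nonempty (G ≃g spiderGraph ![1, 2, 2]) ∨
      Nonempty (G ≃g spiderGraph ![2, 2, 2]) := by
  obtain ⟨l, hmono, hl, hne, hiso⟩ :=
    exists_iso_spiderGraph_of_branchCondition hG hcond hc hcx hx
  rcases eq_of_monotone_of_forall_eq_one_or_two hmono hl hne with rfl | rfl | rfl
  · exact .inl hiso
  · exact .inr (.inl hiso)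
  · exact .inr (.inr hiso)

end Spider

section Models

variable {α β : Type*} {G : SimpleGraph α} {H : SimpleGraph β}

lemma BranchCondition.of_iso [G.LocallyFinite] [H.LocallyFinite] (φ : G ≃g H) {x : α}
    (h : BranchCondition H (φ x)) : BranchCondition G x := by
  intro y hxy hy hx
  rw [← φ.degree_eq] at hy hx
  obtain ⟨hx2, hy3, hleaf⟩ := h (φ y) (φ.map_adj_iff.2 hxy) hy hx
  simp only [φ.degree_eq] at hx2 hy3
  refine ⟨hx2, hy3, fun z hxz hzy ↦ ?_⟩
  rw [← φ.degree_eq]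
  exact hleaf (φ z) (φ.map_adj_iff.2 hxz) (φ.injective.ne hzy)

lemma branchCondition_of_forall_degree_le_two [G.LocallyFinite] (h : ∀ v, G.degree v ≤ 2) (x : α) :
    BranchCondition G x := fun y _ hy _ ↦ absurd (h y) (by omega)

lemma degree_cycleGraph_le_two {n : ℕ} (v : Fin n) : (SimpleGraph.cycleGraph n).degree v ≤ 2 := by
  obtain hn | hn := le_or_gt 3 n
  · obtain ⟨m, rfl⟩ := Nat.exists_eq_add_of_le' hn
    exact SimpleGraph.cycleGraph_degree_three_le.le
  · have := (SimpleGraph.cycleGraph n).degree_lt_card_verts v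
    rw [Fintype.card_fin] at this
    omega

lemma branchCondition_cycleGraph {n : ℕ} (x : Fin n) :
    BranchCondition (SimpleGraph.cycleGraph n) x :=
  branchCondition_of_forall_degree_le_two degree_cycleGraph_le_two x

lemma branchCondition_pathGraph {n : ℕ} [(SimpleGraph.pathGraph n).LocallyFinite] (x : Fin n) :
    BranchCondition (SimpleGraph.pathGraph n) x :=
  branchCondition_of_forall_degree_le_two (fun v ↦
    (SimpleGraph.degree_le_of_le SimpleGraph.pathGraph_le_cycleGraph).trans
      (degree_cycleGraph_le_two v)) x

lemma branchCondition_completeBipartiteGraph [Unique α]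
    [(completeBipartiteGraph α β).LocallyFinite] (x : α ⊕ β) :
    BranchCondition (completeBipartiteGraph α β) x := by
  have hleaf : ∀ b, (completeBipartiteGraph α β).degree (.inr b) = 1 := fun b ↦ by
    rw [SimpleGraph.degree_eq_one_iff_existsUnique_adj]
    exact ⟨.inl default, by simp, by simp [Unique.eq_default]⟩
  rintro y hxy hy hx
  obtain _ | b := x
  · obtain _ | b := y
    · simp at hxy
    · have := hleaf b
      omega
  · have := hleaf b
    omega

lemma branchCondition_spiderGraph {l : Fin 3 → ℕ} (hl : ∀ i, l i ≤ 2) :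
    ∀ x, BranchCondition (spiderGraph l) x := by
  obtain ⟨a, b, c, rfl⟩ : ∃ a b c, l = ![a, b, c] := ⟨l 0, l 1, l 2, by ext i; fin_cases i <;> rfl⟩
  have ha : a ≤ 2 := hl 0
  have hb : b ≤ 2 := hl 1
  have hc : c ≤ 2 := hl 2
  unfold BranchCondition
  interval_cases a <;> interval_cases b <;> interval_cases c <;> decide

end Models

/-- (Hua–Lin classification of `CD(∞,0)`-Ricci-flat graphs of girth at least 5.)
A finite connected simple graph of girth at least 5 with all vertex degrees positive
satisfies `CD(∞,0)`, i.e. `Γ₂(f,f)(x) ≥ 0` for all `f` and `x`, if and only if it is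
isomorphic to a path graph `P_k` (`k ≥ 1` vertices), a cycle graph `C_n` (`n ≥ 5`),
a star graph `Star_n` (`n ≥ 3` leaves), or one of the three extended star graphs with
arm lengths `(1,1,2)`, `(1,2,2)`, `(2,2,2)`. -/
theorem hua_lin_classification_CD_ricci_flat
    (G : SimpleGraph V) [DecidableRel G.Adj]
    (hconn : G.Connected) (hgirth : 5 ≤ G.egirth) (hdeg : ∀ v, 0 < G.degree v) :
    (∀ (f : V → ℝ) (x : V), 0 ≤ G.gamma2Op f f x) ↔
      ((∃ k : ℕ, 1 ≤ k ∧ Nonempty (G ≃g SimpleGraph.pathGraph k)) ∨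
       (∃ n : ℕ, 5 ≤ n ∧ Nonempty (G ≃g SimpleGraph.cycleGraph n)) ∨
       (∃ n : ℕ, 3 ≤ n ∧ Nonempty (G ≃g completeBipartiteGraph Unit (Fin n))) ∨
       Nonempty (G ≃g spiderGraph ![1, 1, 2]) ∨
       Nonempty (G ≃g spiderGraph ![1, 2, 2]) ∨
       Nonempty (G ≃g spiderGraph ![2, 2, 2])) := by
  have hG : G.Preconnected := hconn.preconnected
  rw [forall_gamma2Op_self_nonneg_iff_branchCondition hgirth hdeg]
  constructor
  · intro hcond
    have := hconn.nonempty
    by_cases hsmall : ∀ v, G.degree v ≤ 2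
    · obtain hpath | ⟨n, hn, hiso⟩ := exists_iso_pathGraph_or_exists_iso_cycleGraph hG hsmall
      · exact .inl hpath
      · exact .inr (.inl ⟨n, by exact_mod_cast hgirth.trans hn, hiso⟩)
    push Not at hsmall
    obtain ⟨c, hc⟩ := hsmall
    by_cases hstar : ∀ y, G.Adj c y → G.degree y = 1
    · exact .inr (.inr (.inl ⟨_, hc, nonempty_iso_completeBipartiteGraph hG hstar⟩))
    · push Not at hstar
      obtain ⟨y, hcy, hy⟩ := hstar
      exact .inr (.inr (.inr (nonempty_iso_spiderGraph_of_branchCondition hG hcond hc hcy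
        ((Nat.two_le_iff _).2 ⟨(hdeg y).ne', hy⟩))))
  · rintro (⟨k, -, ⟨φ⟩⟩ | ⟨n, -, ⟨φ⟩⟩ | ⟨n, -, ⟨φ⟩⟩ | ⟨⟨φ⟩⟩ | ⟨⟨φ⟩⟩ | ⟨⟨φ⟩⟩) x
    · classical exact .of_iso φ (branchCondition_pathGraph _)
    · exact .of_iso φ (branchCondition_cycleGraph _)
    · classical exact .of_iso φ (branchCondition_completeBipartiteGraph _)
    all_goals exact .of_iso φ (branchCondition_spiderGraph (by decide) _)
end

section
/- Let G be the directed graph on vertices {1,2,3,4,5} with the nine arrows 1→4, 1→5, 2→4, 3→1, 3→2, 3→5, 4→3, 5→2, 5→4 (an orientation of the 5-vertex dipyramid graph). Then the spaces Ω_p of ∂-invariant allowed p-paths of G satisfy dim Ω₀ = 5, dim Ω₁ = 9, dim Ω₂ = 6, dim Ω₃ = 2, and Ω_p = 0 for all p ≥ 4; consequently the graph Euler number χ(G) = Σ_p (−1)^p dim Ω_p = 5 − 9 + 6 − 2 = 0. -/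
/-!
Deleting an end vertex of an allowed path leaves an allowed path, so `∂v` can leave `A_p` only
through faces that skip the middle vertex of some `a → b → c` with `a ≠ c` and no arrow `a → c`;
such a pair `(a, c)` is called a semi-arrow. Hence `Ω_{p+1}` is cut out of `A_{p+1}` by one
equation for each way a regular `p`-path can run through a semi-arrow, namely that the coefficients
of the paths filling this gap sum to zero.

For `p = 1` these equations are independent, so `dim Ω₂` is the number of allowed 2-paths minus the
number of semi-arrows, here `14 − 8`. If a semi-arrow has only one middle vertex, the equation
has a single term, and every path through it has coefficient zero in `Ω`. In the dipyramid graph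
`(3, 4)` is the only semi-arrow with several middle vertices. This leaves only the 3-paths
`3→1→5→4` and `3→5→2→4`, all of whose faces are allowed, and no path of length at least 4.
-/

open Finsupp

/-- `Λ_p`: the free real vector space on elementary `p`-paths (ordered `(p+1)`-tuples of
vertices) of a finite vertex set `V`. -/
abbrev elemPathSpace (V : Type*) (p : ℕ) : Type _ := (Fin (p + 1) → V) →₀ ℝ

/-- An elementary `p`-path is regular if no two consecutive vertices coincide. -/
def IsRegularPath {V : Type*} {p : ℕ} (s : Fin (p + 1) → V) : Prop :=
  ∀ k : Fin p, s k.castSucc ≠ s k.succ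

/-- An elementary `p`-path is allowed, for a digraph with arrow relation `R`, if every
consecutive pair of vertices is joined by an arrow. -/
def IsAllowedPath {V : Type*} (R : V → V → Prop) {p : ℕ} (s : Fin (p + 1) → V) : Prop :=
  ∀ k : Fin p, R (s k.castSucc) (s k.succ)

/-- The boundary operator `∂ : Λ_{p+1} → Λ_p` on elementary paths:
`∂ e_{i₀…i_{p+1}} = ∑_q (−1)^q e_{i₀…î_q…i_{p+1}}`. -/
noncomputable def pathBoundary (V : Type*) (p : ℕ) :
    elemPathSpace V (p + 1) →ₗ[ℝ] elemPathSpace V p :=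
  Finsupp.lift (elemPathSpace V p) ℝ (Fin (p + 2) → V)
    (fun s => ∑ q : Fin (p + 2), ((-1 : ℝ) ^ (q : ℕ)) • Finsupp.single (s ∘ q.succAbove) 1)

/-- The projection `Λ_p → Λ_p` onto the span `R_p` of the regular elementary paths,
setting every irregular elementary path to zero. -/
noncomputable def regularProj (V : Type*) [DecidableEq V] (p : ℕ) :
    elemPathSpace V p →ₗ[ℝ] elemPathSpace V p :=
  Finsupp.lift (elemPathSpace V p) ℝ (Fin (p + 1) → V)
    (fun s => if ∀ k : Fin p, s k.castSucc ≠ s k.succ then Finsupp.single s 1 else 0)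

/-- The boundary operator on the regular part: compose `∂` with the projection killing
irregular paths (this is the boundary operator of `R_p`, the quotient of `Λ_p` by the
irregular paths). -/
noncomputable def regularBoundary (V : Type*) [DecidableEq V] (p : ℕ) :
    elemPathSpace V (p + 1) →ₗ[ℝ] elemPathSpace V p :=
  (regularProj V p).comp (pathBoundary V p)

/-- `A_p`: the span of the allowed (regular) elementary `p`-paths of the digraph `R`. -/
noncomputable def allowedSubspace {V : Type*} (R : V → V → Prop) (p : ℕ) :
    Submodule ℝ (elemPathSpace V p) :=
  Submodule.span ℝ {x | ∃ s : Fin (p + 1) → V, IsAllowedPath R s ∧ x = Finsupp.single s 1}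

/-- `Ω_p = { v ∈ A_p : ∂v ∈ A_{p−1} }`, the `∂`-invariant subspace of allowed paths
(with `Ω₀ = A₀`). -/
noncomputable def omegaSubspace {V : Type*} [DecidableEq V] (R : V → V → Prop) :
    (p : ℕ) → Submodule ℝ (elemPathSpace V p)
  | 0 => allowedSubspace R 0
  | p + 1 => allowedSubspace R (p + 1) ⊓
      Submodule.comap (regularBoundary V p) (allowedSubspace R p)

/-- The arrows `1→4, 1→5, 2→4, 3→1, 3→2, 3→5, 4→3, 5→2, 5→4` (on vertices `1,…,5`,
relabelled `0,…,4`) of the chosen orientation of the 5-vertex dipyramid graph. -/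
def dipyArrow : Fin 5 → Fin 5 → Prop := fun u v =>
  (u, v) ∈ ([(0, 3), (0, 4), (1, 3), (2, 0), (2, 1), (2, 4), (3, 2), (4, 1), (4, 3)] :
    List (Fin 5 × Fin 5))

lemma finrank_supported {K X : Type*} [Field K] (S : Set X) :
    Module.finrank K (supported K K S) = Nat.card S :=
  Module.finrank_eq_nat_card_basis (.ofRepr (supportedEquivFinsupp S))

lemma succAbove_succ_castSucc_castSucc {n : ℕ} (k : Fin n) :
    k.succ.castSucc.succAbove k.castSucc = k.castSucc.castSucc :=
  Fin.succAbove_succ_self k.castSucc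

lemma succAbove_succ_castSucc_succ {n : ℕ} (k : Fin n) :
    k.succ.castSucc.succAbove k.succ = k.succ.succ :=
  Fin.succAbove_castSucc_self k.succ

section Allowed

variable {V : Type*} {R : V → V → Prop} {p : ℕ}

instance [DecidableRel R] (s : Fin (p + 1) → V) : Decidable (IsAllowedPath R s) :=
  inferInstanceAs (Decidable (∀ _, _))

variable (R p) in
lemma allowedSubspace_eq_supported :
    allowedSubspace R p = supported ℝ ℝ {s | IsAllowedPath R s} := by
  rw [supported_eq_span_single, allowedSubspace]
  congr 1
  ext x
  simp [eq_comm]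

lemma mem_allowedSubspace_iff {v : elemPathSpace V p} :
    v ∈ allowedSubspace R p ↔ ∀ s, ¬ IsAllowedPath R s → v s = 0 := by
  rw [allowedSubspace_eq_supported]
  exact mem_supported' ℝ v

variable (R p) in
lemma finrank_allowedSubspace :
    Module.finrank ℝ (allowedSubspace R p) =
      Nat.card {s : Fin (p + 1) → V // IsAllowedPath R s} := by
  rw [allowedSubspace_eq_supported, finrank_supported]
  rfl

lemma IsAllowedPath.comp_castLE {q : ℕ} (h : q + 1 ≤ p + 1) {s : Fin (p + 1) → V}
    (hs : IsAllowedPath R s) : IsAllowedPath R (s ∘ Fin.castLE h) :=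
  fun k => hs (k.castLE (Nat.le_of_succ_le_succ h))

lemma IsAllowedPath.rel_succAbove {s : Fin (p + 2) → V} (hs : IsAllowedPath R s)
    {q : Fin (p + 2)} {k : Fin p} (hq : q ≠ k.succ.castSucc) :
    R (s (q.succAbove k.castSucc)) (s (q.succAbove k.succ)) := by
  rcases lt_or_gt_of_ne hq with h | h
  · have hk : q ≤ k.castSucc.castSucc := by
      simp only [Fin.lt_def, Fin.le_def, Fin.val_castSucc, Fin.val_succ] at h ⊢
      omega
    rw [Fin.succAbove_of_le_castSucc _ _ hk, Fin.succAbove_of_le_castSucc _ _ h.le]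
    exact hs k.succ
  · have hk : k.castSucc.castSucc < q := by
      simp only [Fin.lt_def, Fin.val_castSucc, Fin.val_succ] at h ⊢
      omega
    rw [Fin.succAbove_of_castSucc_lt _ _ hk, Fin.succAbove_of_castSucc_lt _ _ h]
    exact hs k.castSucc

lemma IsAllowedPath.rel_of_insertNth {u : Fin (p + 1) → V} {k : Fin p} {b : V}
    (h : IsAllowedPath R (Fin.insertNth (α := fun _ => V) k.succ.castSucc b u)) :
    R (u k.castSucc) b ∧ R b (u k.succ) := by
  have left := h k.castSucc
  have right := h k.succ
  rw [← succAbove_succ_castSucc_castSucc, Fin.insertNth_apply_succAbove, Fin.succ_castSucc,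
    Fin.insertNth_apply_same] at left
  rw [← succAbove_succ_castSucc_succ, Fin.insertNth_apply_succAbove,
    Fin.insertNth_apply_same] at right
  exact ⟨left, right⟩

end Allowed

section Boundary

variable {V : Type*} {p : ℕ}

lemma regularProj_apply [DecidableEq V] (w : elemPathSpace V p) (u : Fin (p + 1) → V)
    [Decidable (IsRegularPath u)] :
    regularProj V p w u = if IsRegularPath u then w u else 0 := by
  induction w using Finsupp.induction_linear with
  | zero => simp
  | add f g hf hg => rw [map_add, Finsupp.add_apply, hf, hg, Finsupp.add_apply]; split_ifs <;> simp
  | single s c =>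
    simp only [regularProj, lift_apply, sum_single_index, zero_smul]
    obtain rfl | hsu := eq_or_ne s u
    · unfold IsRegularPath
      split_ifs <;> simp_all
    · split_ifs <;> simp [hsu]

lemma pathBoundary_apply [Fintype V] (v : elemPathSpace V (p + 1)) (u : Fin (p + 1) → V) :
    pathBoundary V p v u =
      ∑ q : Fin (p + 2), (-1 : ℝ) ^ (q : ℕ) *
        ∑ m : V, v (Fin.insertNth (α := fun _ => V) q m u) := by
  induction v using Finsupp.induction_linear with
  | zero => simp
  | add f g hf hg => simp [hf, hg, Finset.sum_add_distrib, mul_add]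
  | single s c =>
    classical
    have sum_insertNth (q : Fin (p + 2)) :
        ∑ m : V, single s c (Fin.insertNth (α := fun _ => V) q m u) =
          if s ∘ q.succAbove = u then c else 0 := by
      have insertNth_eq (m : V) : s = Fin.insertNth (α := fun _ => V) q m u ↔
          m = s q ∧ s ∘ q.succAbove = u := by
        rw [Fin.eq_insertNth_iff, eq_comm (a := m)]
        rfl
      simp [single_apply, insertNth_eq, ite_and]
    simp only [sum_insertNth]
    simp [pathBoundary, Finset.smul_sum, single_apply, mul_comm, ← ite_and]

lemma pathBoundary_apply_of_not_rel [Fintype V] {R : V → V → Prop} {v : elemPathSpace V (p + 1)}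
    (hv : v ∈ allowedSubspace R (p + 1)) {u : Fin (p + 1) → V} {k : Fin p}
    (hk : ¬ R (u k.castSucc) (u k.succ)) :
    pathBoundary V p v u = (-1 : ℝ) ^ (k + 1 : ℕ) *
      ∑ m : V, v (Fin.insertNth (α := fun _ => V) k.succ.castSucc m u) := by
  rw [pathBoundary_apply, Finset.sum_eq_single k.succ.castSucc]
  · simp
  · refine fun q _ hq => mul_eq_zero_of_right _ (Finset.sum_eq_zero fun m _ => ?_)
    refine mem_allowedSubspace_iff.1 hv _ fun hs => hk ?_
    simpa only [Fin.insertNth_apply_succAbove] using hs.rel_succAbove hq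
  · simp

end Boundary

section SemiArrow

variable {V : Type*}

/-- A semi-arrow of a digraph: distinct vertices joined by a 2-path but not by an arrow. These
pairs are the obstructions for a face of an allowed path to be allowed. -/
def IsSemiArrow (R : V → V → Prop) (a c : V) : Prop :=
  a ≠ c ∧ ¬ R a c ∧ ∃ b, R a b ∧ R b c

/-- A semi-arrow with a single middle vertex, which forces coefficients of elements of `Ω_p` to
vanish. -/
def IsSimpleSemiArrow (R : V → V → Prop) (a c : V) : Prop :=
  a ≠ c ∧ ¬ R a c ∧ ∃! b, R a b ∧ R b c

/-- The path has three consecutive vertices `a, b, c` with `(a, c)` a simple semi-arrow; the path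
itself need not be allowed. -/
def HasSimpleSemiArrow (R : V → V → Prop) {p : ℕ} (s : Fin (p + 2) → V) : Prop :=
  ∃ k : Fin p, IsSimpleSemiArrow R (s k.castSucc.castSucc) (s k.succ.succ)

/-- All faces of the path are allowed, also those obtained by deleting an end vertex. An allowed
path with this property is by itself an element of `Ω`. -/
def HasAllowedFaces (R : V → V → Prop) {p : ℕ} (s : Fin (p + 2) → V) : Prop :=
  ∀ q : Fin (p + 2), IsAllowedPath R (s ∘ q.succAbove)

section Decidable

variable (R : V → V → Prop) [DecidableRel R] {p : ℕ}

instance (s : Fin (p + 2) → V) : Decidable (HasAllowedFaces R s) :=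
  inferInstanceAs (Decidable (∀ _, _))

variable [Fintype V] [DecidableEq V]

instance (a c : V) : Decidable (IsSemiArrow R a c) :=
  inferInstanceAs (Decidable (_ ∧ _))

instance (a c : V) : Decidable (IsSimpleSemiArrow R a c) :=
  inferInstanceAs (Decidable (_ ∧ _ ∧ ∃ _, _))

instance (s : Fin (p + 2) → V) : Decidable (HasSimpleSemiArrow R s) :=
  inferInstanceAs (Decidable (∃ _, _))

end Decidable

variable {R : V → V → Prop} {p : ℕ}

lemma IsSimpleSemiArrow.isSemiArrow {a c : V} (h : IsSimpleSemiArrow R a c) :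
    IsSemiArrow R a c :=
  ⟨h.1, h.2.1, h.2.2.exists⟩

lemma HasSimpleSemiArrow.of_comp_castLE {q : ℕ} {h : q + 2 ≤ p + 2} {s : Fin (p + 2) → V}
    (hs : HasSimpleSemiArrow R (s ∘ Fin.castLE h)) : HasSimpleSemiArrow R s := by
  obtain ⟨k, hk⟩ := hs
  exact ⟨k.castLE (by omega), hk⟩

end SemiArrow

section Omega

variable {V : Type*} [DecidableEq V] {R : V → V → Prop} {p : ℕ}

variable (R) in
lemma finrank_omegaSubspace_zero : Module.finrank ℝ (omegaSubspace R 0) = Nat.card V := by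
  rw [omegaSubspace, finrank_allowedSubspace]
  exact Nat.card_congr
    ((Equiv.subtypeUnivEquiv fun _ k => k.elim0).trans (Equiv.funUnique (Fin 1) V))

lemma omegaSubspace_one : omegaSubspace R 1 = allowedSubspace R 1 := by
  refine inf_eq_left.2 fun v _ => mem_allowedSubspace_iff.2 fun u hu => ?_
  exact absurd (fun k : Fin 0 => k.elim0) hu

variable (R) in
lemma finrank_omegaSubspace_one :
    Module.finrank ℝ (omegaSubspace R 1) = Nat.card {e : V × V // R e.1 e.2} := by
  rw [omegaSubspace_one, finrank_allowedSubspace]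
  exact Nat.card_congr ((finTwoArrowEquiv V).subtypeEquiv fun _ => Fin.forall_fin_one)

section Criterion

variable [Fintype V]

lemma mem_omegaSubspace_succ_iff {v : elemPathSpace V (p + 1)} :
    v ∈ omegaSubspace R (p + 1) ↔ v ∈ allowedSubspace R (p + 1) ∧
      ∀ u, IsRegularPath u → ∀ k : Fin p, IsSemiArrow R (u k.castSucc) (u k.succ) →
        ∑ m : V, v (Fin.insertNth (α := fun _ => V) k.succ.castSucc m u) = 0 := by
  classical
  have boundary_iff : v ∈ (allowedSubspace R p).comap (regularBoundary V p) ↔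
      ∀ u, IsRegularPath u → ¬ IsAllowedPath R u → pathBoundary V p v u = 0 := by
    simp only [Submodule.mem_comap, mem_allowedSubspace_iff, regularBoundary,
      LinearMap.comp_apply, regularProj_apply, ite_eq_right_iff]
    exact forall_congr' fun u => forall_comm
  rw [omegaSubspace, Submodule.mem_inf, boundary_iff]
  refine and_congr_right fun hv => forall_congr' fun u => imp_congr_right fun hu => ⟨?_, ?_⟩
  · intro h k hk
    simpa [pathBoundary_apply_of_not_rel hv hk.2.1] using h fun hu => hk.2.1 (hu k)
  · intro h hu'
    obtain ⟨k, hk⟩ := not_forall.1 hu'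
    rw [pathBoundary_apply_of_not_rel hv hk]
    refine mul_eq_zero_of_right _ ?_
    by_cases hb : ∃ b, R (u k.castSucc) b ∧ R b (u k.succ)
    · exact h k ⟨hu k, hk, hb⟩
    · exact Finset.sum_eq_zero fun m _ =>
        mem_allowedSubspace_iff.1 hv _ fun hs => hb ⟨m, hs.rel_of_insertNth⟩

end Criterion

variable [Finite V]

lemma HasSimpleSemiArrow.apply_eq_zero [Std.Irrefl R] {s : Fin (p + 2) → V}
    (hs : HasSimpleSemiArrow R s) {v : elemPathSpace V (p + 1)}
    (hv : v ∈ omegaSubspace R (p + 1)) : v s = 0 := by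
  have := Fintype.ofFinite V
  obtain ⟨hvA, hvΩ⟩ := mem_omegaSubspace_succ_iff.1 hv
  obtain ⟨k, hk⟩ := hs
  by_cases hsA : IsAllowedPath R s
  swap
  · exact mem_allowedSubspace_iff.1 hvA s hsA
  set q := k.succ.castSucc with hq
  set u : Fin (p + 1) → V := q.removeNth s with hu
  have hu_semiArrow : IsSimpleSemiArrow R (u k.castSucc) (u k.succ) := by
    rwa [hu, Fin.removeNth_apply, Fin.removeNth_apply, succAbove_succ_castSucc_castSucc,
      succAbove_succ_castSucc_succ]
  have hu_regular : IsRegularPath u := by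
    intro j
    obtain rfl | hj := eq_or_ne j k
    · exact hu_semiArrow.1
    · exact ne_of_irrefl (hsA.rel_succAbove (by simpa [hq] using hj.symm))
  have insert_self : q.insertNth (s q) u = s := Fin.insertNth_self_removeNth q s
  have sum_eq : ∑ m : V, v (q.insertNth (α := fun _ => V) m u) = v s := by
    rw [Finset.sum_eq_single (s q), insert_self]
    · refine fun m _ hm => mem_allowedSubspace_iff.1 hvA _ fun h => hm ?_
      exact hu_semiArrow.2.2.unique h.rel_of_insertNth
        (insert_self.symm ▸ hsA : IsAllowedPath R (q.insertNth (s q) u)).rel_of_insertNth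
    · simp
  rw [← sum_eq]
  exact hvΩ u hu_regular k hu_semiArrow.isSemiArrow

lemma omegaSubspace_eq_bot_of_le [Std.Irrefl R] {q : ℕ} (hqp : q ≤ p)
    (h : ∀ s : Fin (q + 2) → V, IsAllowedPath R s → HasSimpleSemiArrow R s) :
    omegaSubspace R (p + 1) = ⊥ := by
  refine (Submodule.eq_bot_iff _).2 fun v hv => Finsupp.ext fun s => ?_
  by_cases hs : IsAllowedPath R s
  · have hqp' : q + 2 ≤ p + 2 := by omega
    exact (h _ (hs.comp_castLE hqp')).of_comp_castLE.apply_eq_zero hv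
  · exact mem_allowedSubspace_iff.1 hv.1 s hs

lemma single_mem_omegaSubspace {s : Fin (p + 2) → V} (hs : IsAllowedPath R s)
    (hf : HasAllowedFaces R s) : single s 1 ∈ omegaSubspace R (p + 1) := by
  have := Fintype.ofFinite V
  refine mem_omegaSubspace_succ_iff.2 ⟨Submodule.subset_span ⟨s, hs, rfl⟩, fun u _ k hk => ?_⟩
  refine Finset.sum_eq_zero fun m _ => single_eq_of_ne fun h => hk.2.1 ?_
  obtain ⟨-, hu⟩ := Fin.insertNth_eq_iff.1 h
  rw [hu]
  exact hf _ k

lemma omegaSubspace_succ_eq_supported [Std.Irrefl R]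
    (h : ∀ s : Fin (p + 2) → V, IsAllowedPath R s → HasSimpleSemiArrow R s ∨ HasAllowedFaces R s) :
    omegaSubspace R (p + 1) = supported ℝ ℝ {s | IsAllowedPath R s ∧ HasAllowedFaces R s} := by
  refine le_antisymm (fun v hv => (mem_supported' ℝ v).2 fun s hs => ?_) ?_
  · by_cases hsA : IsAllowedPath R s
    · have hsimple := (h s hsA).resolve_right fun hf => hs ⟨hsA, hf⟩
      exact hsimple.apply_eq_zero hv
    · exact mem_allowedSubspace_iff.1 hv.1 s hsA
  · rw [supported_eq_span_single, Submodule.span_le]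
    rintro _ ⟨s, ⟨hs, hf⟩, rfl⟩
    exact single_mem_omegaSubspace hs hf

lemma finrank_omegaSubspace_succ [Std.Irrefl R]
    (h : ∀ s : Fin (p + 2) → V, IsAllowedPath R s → HasSimpleSemiArrow R s ∨ HasAllowedFaces R s) :
    Module.finrank ℝ (omegaSubspace R (p + 1)) =
      Nat.card {s : Fin (p + 2) → V // IsAllowedPath R s ∧ HasAllowedFaces R s} := by
  rw [omegaSubspace_succ_eq_supported h, finrank_supported]
  rfl

end Omega

section OmegaTwo

variable {V : Type*} (R : V → V → Prop)

section SemiArrowSum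

variable [Fintype V]

/-- The defining equations of `Ω₂` inside `A₂`: the map sending `v` to its sums of coefficients over
all middle vertices, one sum for each semi-arrow. -/
noncomputable def semiArrowSum :
    elemPathSpace V 2 →ₗ[ℝ] ({e : V × V // IsSemiArrow R e.1 e.2} → ℝ) :=
  LinearMap.pi fun e => ∑ m : V, lapply ![e.1.1, m, e.1.2]

variable {R} in
lemma semiArrowSum_apply (v : elemPathSpace V 2) (e : {e : V × V // IsSemiArrow R e.1 e.2}) :
    semiArrowSum R v e = ∑ m : V, v ![e.1.1, m, e.1.2] := by
  simp [semiArrowSum]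

lemma omegaSubspace_two [DecidableEq V] :
    omegaSubspace R 2 = allowedSubspace R 2 ⊓ LinearMap.ker (semiArrowSum R) := by
  ext v
  rw [mem_omegaSubspace_succ_iff, Submodule.mem_inf, LinearMap.mem_ker]
  refine and_congr_right fun _ => ⟨fun h => funext fun ⟨⟨a, c⟩, hac⟩ => ?_, fun h u _ k hk => ?_⟩
  · rw [semiArrowSum_apply]
    have hreg : IsRegularPath ![a, c] := fun k => by
      rw [Fin.fin_one_eq_zero k]; exact hac.1
    refine .trans (Finset.sum_congr rfl fun m _ => congrArg v ?_) (h ![a, c] hreg 0 hac)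
    ext i; fin_cases i <;> rfl
  · obtain rfl := Fin.fin_one_eq_zero k
    refine .trans (Finset.sum_congr rfl fun m _ => congrArg v ?_)
      ((semiArrowSum_apply v ⟨(u 0, u 1), hk⟩).symm.trans (congrFun h _))
    ext i; fin_cases i <;> rfl

lemma map_semiArrowSum_allowedSubspace :
    (allowedSubspace R 2).map (semiArrowSum R) = ⊤ := by
  classical
  choose b hb using fun e : {e : V × V // IsSemiArrow R e.1 e.2} => e.2.2.2
  have hallowed e : IsAllowedPath R ![e.1.1, b e, e.1.2] := by
    intro k
    fin_cases k
    exacts [(hb e).1, (hb e).2]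
  have hsingle e : semiArrowSum R (single ![e.1.1, b e, e.1.2] 1) = Pi.single e 1 := by
    ext e'
    simp [semiArrowSum_apply, single_apply, Pi.single_apply, eq_comm (a := e'), Subtype.ext_iff,
      Prod.ext_iff, ite_and]
  rw [eq_top_iff, ← (Pi.basisFun ℝ _).span_eq, Submodule.span_le]
  rintro _ ⟨e, rfl⟩
  rw [Pi.basisFun_apply, ← hsingle e]
  exact Submodule.mem_map_of_mem (Submodule.subset_span ⟨_, hallowed e, rfl⟩)

end SemiArrowSum

theorem finrank_omegaSubspace_two_add_card_isSemiArrow [Finite V] [DecidableEq V] :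
    Module.finrank ℝ (omegaSubspace R 2) + Nat.card {e : V × V // IsSemiArrow R e.1 e.2} =
      Nat.card {s : Fin 3 → V // IsAllowedPath R s} := by
  classical
  have := Fintype.ofFinite V
  let D : allowedSubspace R 2 →ₗ[ℝ] ({e : V × V // IsSemiArrow R e.1 e.2} → ℝ) :=
    (semiArrowSum R).domRestrict (allowedSubspace R 2)
  have hrange : LinearMap.range D = ⊤ := by
    rw [LinearMap.range_domRestrict, map_semiArrowSum_allowedSubspace]
  have hker : (LinearMap.ker D).map (allowedSubspace R 2).subtype = omegaSubspace R 2 := by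
    rw [LinearMap.ker_domRestrict, Submodule.map_comap_subtype, omegaSubspace_two]
  have rank_nullity := LinearMap.finrank_range_add_finrank_ker (K := ℝ) (V := allowedSubspace R 2) D
  rw [hrange, finrank_top, Module.finrank_fintype_fun_eq_card, finrank_allowedSubspace,
    (Submodule.equivSubtypeMap _ _).finrank_eq, hker, ← Nat.card_eq_fintype_card,
    add_comm] at rank_nullity
  exact rank_nullity

end OmegaTwo

section Dipyramid

instance : DecidableRel dipyArrow :=
  fun _ _ => inferInstanceAs (Decidable (_ ∈ _))

instance : Std.Irrefl dipyArrow :=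
  ⟨by decide⟩

lemma card_dipyArrow : Nat.card {e : Fin 5 × Fin 5 // dipyArrow e.1 e.2} = 9 := by
  rw [Nat.card_eq_fintype_card]
  decide +kernel

lemma card_isSemiArrow_dipyArrow :
    Nat.card {e : Fin 5 × Fin 5 // IsSemiArrow dipyArrow e.1 e.2} = 8 := by
  rw [Nat.card_eq_fintype_card]
  decide +kernel

lemma card_isAllowedPath_dipyArrow_two :
    Nat.card {s : Fin 3 → Fin 5 // IsAllowedPath dipyArrow s} = 14 := by
  rw [Nat.card_eq_fintype_card]
  decide +kernel

lemma card_hasAllowedFaces_dipyArrow_three :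
    Nat.card {s : Fin 4 → Fin 5 // IsAllowedPath dipyArrow s ∧ HasAllowedFaces dipyArrow s} =
      2 := by
  rw [Nat.card_eq_fintype_card]
  decide +kernel

lemma hasSimpleSemiArrow_or_hasAllowedFaces_dipyArrow : ∀ s : Fin 4 → Fin 5,
    IsAllowedPath dipyArrow s → HasSimpleSemiArrow dipyArrow s ∨ HasAllowedFaces dipyArrow s := by
  decide +kernel

lemma hasSimpleSemiArrow_dipyArrow : ∀ s : Fin 5 → Fin 5,
    IsAllowedPath dipyArrow s → HasSimpleSemiArrow dipyArrow s := by
  decide +kernel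

end Dipyramid

/-- For the directed 5-vertex dipyramid graph with the nine arrows
`1→4, 1→5, 2→4, 3→1, 3→2, 3→5, 4→3, 5→2, 5→4`, the spaces `Ω_p` of `∂`-invariant
allowed `p`-paths satisfy `dim Ω₀ = 5`, `dim Ω₁ = 9`, `dim Ω₂ = 6`, `dim Ω₃ = 2` and
`Ω_p = 0` for `p ≥ 4`; consequently the graph Euler number is
`χ = 5 − 9 + 6 − 2 = 0`. -/
theorem dipyramid_digraph_omega_dimensions :
    Module.finrank ℝ (omegaSubspace dipyArrow 0) = 5 ∧
    Module.finrank ℝ (omegaSubspace dipyArrow 1) = 9 ∧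
    Module.finrank ℝ (omegaSubspace dipyArrow 2) = 6 ∧
    Module.finrank ℝ (omegaSubspace dipyArrow 3) = 2 ∧
    (∀ p : ℕ, 4 ≤ p → omegaSubspace dipyArrow p = ⊥) ∧
    ∑ p ∈ Finset.range 4,
      (-1 : ℤ) ^ p * (Module.finrank ℝ (omegaSubspace dipyArrow p) : ℤ) = 0 := by
  have dim_zero : Module.finrank ℝ (omegaSubspace dipyArrow 0) = 5 := by
    rw [finrank_omegaSubspace_zero, Nat.card_fin]
  have dim_one : Module.finrank ℝ (omegaSubspace dipyArrow 1) = 9 := by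
    rw [finrank_omegaSubspace_one, card_dipyArrow]
  have dim_two : Module.finrank ℝ (omegaSubspace dipyArrow 2) = 6 := by
    have dim_add := finrank_omegaSubspace_two_add_card_isSemiArrow dipyArrow
    rw [card_isSemiArrow_dipyArrow, card_isAllowedPath_dipyArrow_two] at dim_add
    omega
  have dim_three : Module.finrank ℝ (omegaSubspace dipyArrow 3) = 2 := by
    rw [finrank_omegaSubspace_succ hasSimpleSemiArrow_or_hasAllowedFaces_dipyArrow,
      card_hasAllowedFaces_dipyArrow_three]
  refine ⟨dim_zero, dim_one, dim_two, dim_three, fun p hp => ?_,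
    by simp [Finset.sum_range_succ, dim_zero, dim_one, dim_two, dim_three]⟩
  obtain ⟨p, rfl⟩ := Nat.exists_eq_add_of_le' hp
  exact omegaSubspace_eq_bot_of_le (Nat.le_add_left 3 p) hasSimpleSemiArrow_dipyArrow
end
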